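/- arXiv:1805.11706 — 5 statements merged into one kernel-verified Lean document; each statement's English description precedes it below -/
import Mathlib

section
/- Let λ > 0 and for each s ∈ 𝒮 define Z_λ(s) = Σ_a q(a|s) e^{A(s,a)/λ} and π^λ(a|s) = q(a|s) e^{A(s,a)/λ} / Z_λ(s). Let Γ^λ = { s ∈ 𝒮 : KL(π^λ(·|s) ‖ q(·|s)) ≤ ε }. Suppose that for every s ∉ Γ^λ there exists λ_s ≥ λ with KL(π^{λ_s}(·|s) ‖ q(·|s)) = ε, where π^{λ_s}(a|s) = q(a|s) e^{A(s,a)/λ_s} / Z_{λ_s}(s). Define the policy π̃ by π̃(·|s) = π^λ(·|s) for s ∈ Γ^λ and π̃(·|s) = π^{λ_s}(·|s) for s ∉ Γ^λ, and suppose Σ_s d(s) · KL(π̃(·|s) ‖ q(·|s)) = δ. Then π̃ is optimal for the constrained problem: for every policy π satisfying Σ_s d(s) · KL(π(·|s) ‖ q(·|s)) ≤ δ and KL(π(·|s) ‖ q(·|s)) ≤ ε for all s ∈ 𝒮, one has Σ_s d(s) Σ_a π(a|s) A(s,a) ≤ Σ_s d(s) Σ_a π̃(a|s) A(s,a). -/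
/-- KL divergence between two distributions on a finite action space,
with the convention `0 * log 0 = 0` (automatic in Lean). -/
noncomputable def KL {A : Type*} [Fintype A] (p q : A → ℝ) : ℝ :=
  ∑ a, p a * Real.log (p a / q a)

/-- Normalization constant `Z_λ(s) = ∑_a q(a|s) e^{A(s,a)/λ}`. -/
noncomputable def Zfun {S A : Type*} [Fintype A] (q : S → A → ℝ) (Adv : S → A → ℝ)
    (lam : ℝ) (s : S) : ℝ :=
  ∑ a, q s a * Real.exp (Adv s a / lam)

/-- The exponentially tilted policy `π^λ(a|s) = q(a|s) e^{A(s,a)/λ} / Z_λ(s)`. -/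
noncomputable def piLam {S A : Type*} [Fintype A] (q : S → A → ℝ) (Adv : S → A → ℝ)
    (lam : ℝ) (s : S) (a : A) : ℝ :=
  q s a * Real.exp (Adv s a / lam) / Zfun q Adv lam s

theorem gibbs_gap {S A : Type*} [Fintype A] [Nonempty A]
    (q : S → A → ℝ) (hqpos : ∀ s a, 0 < q s a) (Adv : S → A → ℝ) (m : ℝ) (hm : 0 < m) (s : S)
    (p : A → ℝ) (hp : ∀ a, 0 ≤ p a) (hs : ∑ a, p a = 1) :
    ∑ a, p a * Adv s a - ∑ a, piLam q Adv m s a * Adv s a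
      ≤ m * (KL p (q s) - KL (piLam q Adv m s) (q s)) := by
  have hZ : 0 < Zfun q Adv m s :=
    Finset.sum_pos (fun a _ => mul_pos (hqpos s a) (Real.exp_pos _)) Finset.univ_nonempty
  have hpi : ∀ a, 0 < piLam q Adv m s a := fun a =>
    div_pos (mul_pos (hqpos s a) (Real.exp_pos _)) hZ
  have hpisum : ∑ a, piLam q Adv m s a = 1 := by
    unfold piLam
    rw [← Finset.sum_div]
    exact div_self hZ.ne'
  have hlog : ∀ a, m * Real.log (piLam q Adv m s a / q s a)
      = Adv s a - m * Real.log (Zfun q Adv m s) := by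
    intro a
    have hq := (hqpos s a).ne'
    have h1 : piLam q Adv m s a / q s a = Real.exp (Adv s a / m) / Zfun q Adv m s := by
      unfold piLam
      field_simp
    rw [h1, Real.log_div (Real.exp_pos _).ne' hZ.ne', Real.log_exp]
    field_simp
  have hKL : m * KL (piLam q Adv m s) (q s)
      = ∑ a, piLam q Adv m s a * Adv s a - m * Real.log (Zfun q Adv m s) := by
    have h2 : m * Real.log (Zfun q Adv m s)
        = ∑ a, piLam q Adv m s a * (m * Real.log (Zfun q Adv m s)) := by
      rw [← Finset.sum_mul, hpisum, one_mul]
    rw [h2, ← Finset.sum_sub_distrib, KL, Finset.mul_sum]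
    refine Finset.sum_congr rfl fun a _ => ?_
    rw [← mul_sub, ← hlog a]
    ring
  have hterm : ∀ a, p a * Adv s a - p a * (m * Real.log (Zfun q Adv m s))
      ≤ m * (p a * Real.log (p a / q s a)) + m * (piLam q Adv m s a - p a) := by
    intro a
    rw [← mul_sub, ← hlog a]
    rcases (hp a).eq_or_lt with h0 | h0
    · rw [← h0]
      have := mul_pos hm (hpi a)
      simp only [zero_mul, mul_zero, sub_zero, zero_add]
      exact this.le
    · have h3 := Real.log_le_sub_one_of_pos (div_pos (hpi a) h0)
      rw [Real.log_div (hpi a).ne' h0.ne'] at h3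
      rw [Real.log_div (hpi a).ne' (hqpos s a).ne', Real.log_div h0.ne' (hqpos s a).ne']
      have h4 := mul_le_mul_of_nonneg_left h3 (mul_pos hm h0).le
      have h5 : m * p a * (piLam q Adv m s a / p a - 1) = m * (piLam q Adv m s a - p a) := by
        field_simp
      rw [h5] at h4
      linarith
  have hsum := Finset.sum_le_sum fun a (_ : a ∈ Finset.univ) => hterm a
  rw [Finset.sum_sub_distrib, ← Finset.sum_mul, hs, Finset.sum_add_distrib, ← Finset.mul_sum,
    ← Finset.mul_sum, Finset.sum_sub_distrib, hs, hpisum] at hsum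
  rw [mul_sub, hKL]
  unfold KL
  linarith

/-- Theorem 1 (forward-KL, aggregated and disaggregated constraints): the policy `π̃`
which equals `π^λ` on `Γ^λ = {s : KL(π^λ(·|s) ‖ q(·|s)) ≤ ε}` and `π^{λ_s}` elsewhere,
with the aggregated KL constraint binding, is optimal for the constrained problem. -/
theorem spu_forward_KL_optimal
    {S A : Type*} [Fintype S] [Fintype A] [Nonempty S] [Nonempty A]
    (q : S → A → ℝ) (hqpos : ∀ s a, 0 < q s a) (hqsum : ∀ s, ∑ a, q s a = 1)
    (d : S → ℝ) (hdpos : ∀ s, 0 < d s) (hdsum : ∑ s, d s = 1)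
    (Adv : S → A → ℝ) (δ ε : ℝ) (hδ : 0 < δ) (hε : 0 < ε)
    (lam : ℝ) (hlam : 0 < lam)
    (lamS : S → ℝ)
    (hlamS : ∀ s, ε < KL (piLam q Adv lam s) (q s) →
      lam ≤ lamS s ∧ KL (piLam q Adv (lamS s) s) (q s) = ε)
    (tpi : S → A → ℝ)
    (htpi : ∀ s, tpi s =
      if KL (piLam q Adv lam s) (q s) ≤ ε then piLam q Adv lam s
      else piLam q Adv (lamS s) s)
    (hbinding : ∑ s, d s * KL (tpi s) (q s) = δ) :
    ∀ pol : S → A → ℝ,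
      (∀ s a, 0 ≤ pol s a) → (∀ s, ∑ a, pol s a = 1) →
      (∑ s, d s * KL (pol s) (q s) ≤ δ) →
      (∀ s, KL (pol s) (q s) ≤ ε) →
      ∑ s, d s * ∑ a, pol s a * Adv s a ≤ ∑ s, d s * ∑ a, tpi s a * Adv s a := by
  intro pol h0 h1 hagg hdis
  have key : ∀ s, ∑ a, pol s a * Adv s a - ∑ a, tpi s a * Adv s a
      ≤ lam * (KL (pol s) (q s) - KL (tpi s) (q s)) := by
    intro s
    by_cases hc : KL (piLam q Adv lam s) (q s) ≤ ε
    · rw [htpi s, if_pos hc]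
      exact gibbs_gap q hqpos Adv lam hlam s (pol s) (h0 s) (h1 s)
    · obtain ⟨hl, he⟩ := hlamS s (not_le.mp hc)
      rw [htpi s, if_neg hc]
      refine (gibbs_gap q hqpos Adv (lamS s) (hlam.trans_le hl) s (pol s) (h0 s) (h1 s)).trans ?_
      rw [he]
      exact mul_le_mul_of_nonpos_right hl (sub_nonpos.mpr (hdis s))
  have hsum := Finset.sum_le_sum fun s (_ : s ∈ Finset.univ) =>
    mul_le_mul_of_nonneg_left (key s) (hdpos s).le
  have e : ∑ s, d s * (lam * (KL (pol s) (q s) - KL (tpi s) (q s)))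
      = lam * (∑ s, d s * KL (pol s) (q s) - ∑ s, d s * KL (tpi s) (q s)) := by
    rw [← Finset.sum_sub_distrib, Finset.mul_sum]
    exact Finset.sum_congr rfl fun s _ => by ring
  rw [e, hbinding] at hsum
  simp only [mul_sub (d _), Finset.sum_sub_distrib] at hsum
  have := mul_nonpos_of_nonneg_of_nonpos hlam.le (sub_nonpos.mpr hagg)
  linarith
end

section
/- Suppose π* is a policy of the form π*(a|s) = q(a|s) · λ(s) / (λ'(s) − A(s,a)), where for each s ∈ 𝒮, λ(s) > 0 and λ'(s) > max_a A(s,a), each π*(·|s) is a probability distribution on 𝒜, and the reverse-KL constraint is binding: KL(q(·|s) ‖ π*(·|s)) = ε for every s ∈ 𝒮. Then π* is optimal for the backward-KL constrained problem: for every policy π with π(a|s) > 0 for all s, a and KL(q(·|s) ‖ π(·|s)) ≤ ε for all s ∈ 𝒮, one has Σ_s d(s) Σ_a π(a|s) A(s,a) ≤ Σ_s d(s) Σ_a π*(a|s) A(s,a). -/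
/-- Theorem 2 (backward/reverse KL disaggregated constraints): the policy
`π*(a|s) = q(a|s) · λ(s) / (λ'(s) − A(s,a))` with the reverse-KL constraint binding
is optimal for the backward-KL constrained problem. -/
theorem spu_backward_KL_optimal
    {S A : Type*} [Fintype S] [Fintype A] [Nonempty S] [Nonempty A]
    (q : S → A → ℝ) (hqpos : ∀ s a, 0 < q s a) (hqsum : ∀ s, ∑ a, q s a = 1)
    (d : S → ℝ) (hdpos : ∀ s, 0 < d s) (hdsum : ∑ s, d s = 1)
    (Adv : S → A → ℝ) (ε : ℝ) (hε : 0 < ε)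
    (lam lam' : S → ℝ) (hlam : ∀ s, 0 < lam s) (hlam' : ∀ s a, Adv s a < lam' s)
    (pistar : S → A → ℝ)
    (hpistar : ∀ s a, pistar s a = q s a * lam s / (lam' s - Adv s a))
    (hpistar_sum : ∀ s, ∑ a, pistar s a = 1)
    (hbinding : ∀ s, KL (q s) (pistar s) = ε) :
    ∀ pol : S → A → ℝ,
      (∀ s a, 0 < pol s a) → (∀ s, ∑ a, pol s a = 1) →
      (∀ s, KL (q s) (pol s) ≤ ε) →
      ∑ s, d s * ∑ a, pol s a * Adv s a ≤ ∑ s, d s * ∑ a, pistar s a * Adv s a := by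
  intro pol hpos hsum hKL
  refine Finset.sum_le_sum fun s _ => mul_le_mul_of_nonneg_left ?_ (hdpos s).le
  have hl := hlam s
  have hd : ∀ a, 0 < lam' s - Adv s a := fun a => sub_pos.mpr (hlam' s a)
  have hps : ∀ a, 0 < pistar s a := fun a => by
    rw [hpistar]
    exact div_pos (mul_pos (hqpos s a) hl) (hd a)
  have h1 : ∑ a, pistar s a * (lam' s - Adv s a) = lam s := by
    calc ∑ a, pistar s a * (lam' s - Adv s a) = ∑ a, q s a * lam s := by
          refine Finset.sum_congr rfl fun a _ => ?_
          rw [hpistar, div_mul_cancel₀ _ (hd a).ne']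
      _ = lam s := by rw [← Finset.sum_mul, hqsum, one_mul]
  have h2 : KL (q s) (pistar s) - KL (q s) (pol s)
      ≤ ∑ a, (pol s a * (lam' s - Adv s a) / lam s - q s a) := by
    unfold KL
    rw [← Finset.sum_sub_distrib]
    refine Finset.sum_le_sum fun a _ => ?_
    have hq := hqpos s a
    have hp := hpos s a
    have hlog := Real.log_le_sub_one_of_pos (div_pos hp (hps a))
    rw [Real.log_div hp.ne' (hps a).ne'] at hlog
    rw [Real.log_div hq.ne' (hps a).ne', Real.log_div hq.ne' hp.ne']
    have hm := mul_le_mul_of_nonneg_left hlog hq.le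
    have he : q s a * (pol s a / pistar s a - 1)
        = pol s a * (lam' s - Adv s a) / lam s - q s a := by
      have := (hd a).ne'
      rw [hpistar]
      field_simp
    linarith
  rw [Finset.sum_sub_distrib, hqsum, ← Finset.sum_div, hbinding] at h2
  have h3 : 1 ≤ (∑ a, pol s a * (lam' s - Adv s a)) / lam s := by
    have := hKL s
    linarith
  rw [le_div_iff₀ hl, one_mul] at h3
  simp only [mul_sub, Finset.sum_sub_distrib, ← Finset.sum_mul, hsum, hpistar_sum] at h1 h3
  linarith
end

section
/- Let λ > 0 and define, for i = 1, …, m: π*_i = q_i · min{1 + λ A_i, 1 + ε} if A_i ≥ 0, and π*_i = q_i · max{1 + λ A_i, 1 − ε} if A_i < 0. Suppose the aggregate constraint is binding: Σ_{i=1}^m ((π*_i − q_i)/q_i)² = δ. Then (π*_1, …, π*_m) is optimal for the L∞-constrained problem: for every (π_1, …, π_m) ∈ ℝ^m satisfying |π_i − q_i|/q_i ≤ ε for all i and Σ_{i=1}^m ((π_i − q_i)/q_i)² ≤ δ, one has Σ_{i=1}^m A_i · π_i/q_i ≤ Σ_{i=1}^m A_i · π*_i/q_i. -/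
/-- Theorem 3 (L∞ constraint): the clipped solution
`π*_i = q_i · min{1 + λ A_i, 1 + ε}` for `A_i ≥ 0`,
`π*_i = q_i · max{1 + λ A_i, 1 − ε}` for `A_i < 0`,
with the aggregate quadratic constraint binding, is optimal for the
L∞-constrained problem. -/
theorem spu_Linf_optimal
    (m : ℕ) (hm : 1 ≤ m)
    (A q : Fin m → ℝ) (hq : ∀ i, 0 < q i)
    (ε δ : ℝ) (hε : 0 < ε) (hδ : 0 < δ)
    (lam : ℝ) (hlam : 0 < lam)
    (pistar : Fin m → ℝ)
    (hpistar : ∀ i, pistar i =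
      if 0 ≤ A i then q i * min (1 + lam * A i) (1 + ε)
      else q i * max (1 + lam * A i) (1 - ε))
    (hbinding : ∑ i, ((pistar i - q i) / q i) ^ 2 = δ) :
    ∀ pol : Fin m → ℝ,
      (∀ i, |pol i - q i| / q i ≤ ε) →
      (∑ i, ((pol i - q i) / q i) ^ 2 ≤ δ) →
      ∑ i, A i * pol i / q i ≤ ∑ i, A i * pistar i / q i := by
  intro pol hpol hsum
  have key : ∀ i, 2 * lam * (A i * pol i / q i - A i * pistar i / q i) ≤
      ((pol i - q i) / q i) ^ 2 - ((pistar i - q i) / q i) ^ 2 := by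
    intro i
    have hqi := hq i
    have hne := hqi.ne'
    have h1 := hpol i
    obtain ⟨x, hx⟩ : ∃ x, x = (pol i - q i) / q i := ⟨_, rfl⟩
    obtain ⟨y, hy⟩ : ∃ y, y = (pistar i - q i) / q i := ⟨_, rfl⟩
    have e1 : A i * pol i / q i = A i * (1 + x) := by
      rw [hx]; field_simp; ring
    have e2 : A i * pistar i / q i = A i * (1 + y) := by
      rw [hy]; field_simp; ring
    have hxa : |x| ≤ ε := by
      rw [hx, abs_div, abs_of_pos hqi]; exact h1
    obtain ⟨hl, hu⟩ := abs_le.mp hxa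
    rw [e1, e2, ← hx, ← hy]
    have hp := hpistar i
    have hyy : pistar i = q i * (1 + y) := by
      rw [hy]; field_simp; ring
    rw [hyy] at hp
    split_ifs at hp with hA
    · have hp' := mul_left_cancel₀ hne hp
      rcases le_total (1 + lam * A i) (1 + ε) with h | h
      · rw [min_eq_left h] at hp'
        have : y = lam * A i := by linarith
        nlinarith [sq_nonneg (x - y)]
      · rw [min_eq_right h] at hp'
        have : y = ε := by linarith
        subst this
        nlinarith [mul_nonneg (sub_nonneg.2 h) (sub_nonneg.2 hu), sq_nonneg (x - y)]
    · have hp' := mul_left_cancel₀ hne hp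
      rcases le_total (1 - ε) (1 + lam * A i) with h | h
      · rw [max_eq_left h] at hp'
        have : y = lam * A i := by linarith
        nlinarith [sq_nonneg (x - y)]
      · rw [max_eq_right h] at hp'
        have : y = -ε := by linarith
        subst this
        nlinarith [mul_nonneg (sub_nonneg.2 h) (sub_nonneg.2 hl), sq_nonneg (x + ε)]
  have hs := Finset.sum_le_sum (fun i (_ : i ∈ Finset.univ) => key i)
  rw [← Finset.mul_sum, Finset.sum_sub_distrib, Finset.sum_sub_distrib, hbinding] at hs
  by_contra hc
  push Not at hc
  have := mul_pos (mul_pos two_pos hlam) (sub_pos.2 hc)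
  linarith
end

section
/- Let μ > 0 and κ > max_a A(a), and suppose π*(a) = q(a) · μ / (κ − A(a)) defines a probability distribution on 𝒜 (i.e. Σ_a π*(a) = 1). Then π* maximizes the reverse-KL Lagrangian: for every probability distribution p on 𝒜 with p(a) > 0 for all a, Σ_a p(a) A(a) − μ · KL(q ‖ p) ≤ Σ_a π*(a) A(a) − μ · KL(q ‖ π*). -/
/-- Reverse-KL Lagrangian maximization: `π*(a) = q(a) · μ / (κ − A(a))` maximizes
`p ↦ ∑_a p(a) A(a) − μ · KL(q ‖ p)` over everywhere-positive distributions `p`. -/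
theorem reverse_KL_lagrangian_optimal
    {A : Type*} [Fintype A] [Nonempty A]
    (q : A → ℝ) (hqpos : ∀ a, 0 < q a) (hqsum : ∑ a, q a = 1)
    (Adv : A → ℝ) (μ κ : ℝ) (hμ : 0 < μ) (hκ : ∀ a, Adv a < κ)
    (pistar : A → ℝ)
    (hpistar : ∀ a, pistar a = q a * μ / (κ - Adv a))
    (hpistar_sum : ∑ a, pistar a = 1) :
    ∀ p : A → ℝ, (∀ a, 0 < p a) → ∑ a, p a = 1 →
      ∑ a, p a * Adv a - μ * KL q p ≤ ∑ a, pistar a * Adv a - μ * KL q pistar := by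
  intro p hp hpsum
  have key : ∀ a, p a * Adv a - μ * (q a * Real.log (q a / p a)) - κ * p a ≤
      pistar a * Adv a - μ * (q a * Real.log (q a / pistar a)) - κ * pistar a := by
    intro a
    have hd : 0 < κ - Adv a := sub_pos.mpr (hκ a)
    have hq := hqpos a
    have hpi : 0 < pistar a := by rw [hpistar]; positivity
    have hrel : pistar a * (κ - Adv a) = q a * μ := by
      rw [hpistar]; field_simp
    have hlog := Real.log_le_sub_one_of_pos (div_pos (hp a) hpi)
    rw [Real.log_div (hp a).ne' hpi.ne'] at hlog
    have h1 := mul_le_mul_of_nonneg_left hlog (mul_pos hq hμ).le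
    have h2 : q a * μ * (p a / pistar a - 1) = (p a - pistar a) * (κ - Adv a) := by
      rw [← hrel]; field_simp
    rw [h2] at h1
    rw [Real.log_div hq.ne' (hp a).ne', Real.log_div hq.ne' hpi.ne']
    linarith
  have h := Finset.sum_le_sum (fun a (_ : a ∈ Finset.univ) => key a)
  simp only [Finset.sum_sub_distrib, ← Finset.mul_sum, hpsum, hpistar_sum] at h
  unfold KL
  linarith
end

section
/- Let λ₀ > 0 and κ > max_a A(a), suppose π*(a) = q(a) · λ₀ / (κ − A(a)) defines a probability distribution on 𝒜, and suppose the cross-entropy constraint is binding: −Σ_a q(a) log π*(a) = ε'. Then π* is optimal for the decomposed backward-KL problem: for every probability distribution p on 𝒜 with p(a) > 0 for all a and −Σ_a q(a) log p(a) ≤ ε', one has Σ_a p(a) A(a) ≤ Σ_a π*(a) A(a). -/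
/-- Decomposed backward-KL problem: `π*(a) = q(a) · λ₀ / (κ − A(a))` with the
cross-entropy constraint binding (`−∑_a q(a) log π*(a) = ε'`) is optimal:
every everywhere-positive distribution `p` with `−∑_a q(a) log p(a) ≤ ε'`
satisfies `∑_a p(a) A(a) ≤ ∑_a π*(a) A(a)`. -/
theorem decomposed_backward_KL_optimal
    {A : Type*} [Fintype A] [Nonempty A]
    (q : A → ℝ) (hqpos : ∀ a, 0 < q a) (hqsum : ∑ a, q a = 1)
    (Adv : A → ℝ) (ε' : ℝ)
    (lam₀ κ : ℝ) (hlam₀ : 0 < lam₀) (hκ : ∀ a, Adv a < κ)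
    (pistar : A → ℝ)
    (hpistar : ∀ a, pistar a = q a * lam₀ / (κ - Adv a))
    (hpistar_sum : ∑ a, pistar a = 1)
    (hbinding : -∑ a, q a * Real.log (pistar a) = ε') :
    ∀ p : A → ℝ, (∀ a, 0 < p a) → ∑ a, p a = 1 →
      (-∑ a, q a * Real.log (p a) ≤ ε') →
      ∑ a, p a * Adv a ≤ ∑ a, pistar a * Adv a := by
  intro p hp hpsum hc
  have key : ∀ a, lam₀ * (q a * Real.log (p a) - q a * Real.log (pistar a)) ≤
      κ * p a - p a * Adv a - (κ * pistar a - pistar a * Adv a) := by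
    intro a
    have hd : 0 < κ - Adv a := sub_pos.mpr (hκ a)
    have hq := hqpos a
    have hpi : 0 < pistar a := by rw [hpistar a]; positivity
    have hmul : pistar a * (κ - Adv a) = q a * lam₀ := by
      rw [hpistar a]; field_simp
    have hlog := Real.log_le_sub_one_of_pos (div_pos (hp a) hpi)
    rw [Real.log_div (hp a).ne' hpi.ne'] at hlog
    have h1 := mul_le_mul_of_nonneg_left hlog (mul_pos hq hlam₀).le
    have h2 : q a * lam₀ * (p a / pistar a - 1) =
        p a * (κ - Adv a) - pistar a * (κ - Adv a) := by
      rw [← hmul]; field_simp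
    rw [h2] at h1
    linarith
  have hs := Finset.sum_le_sum (fun a (_ : a ∈ Finset.univ) => key a)
  simp only [← Finset.mul_sum, Finset.sum_sub_distrib, hpsum, hpistar_sum] at hs
  have h0 : 0 ≤ lam₀ * (∑ a, q a * Real.log (p a) - ∑ a, q a * Real.log (pistar a)) :=
    mul_nonneg hlam₀.le (by linarith)
  linarith
end
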